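/- Let δ ∈ ℝ and let u, g: ℝ² → ℝ (variables x,t) be smooth with g nowhere vanishing, such that u satisfies the Kaup–Kupershmidt equation u_t = u_{xxxxx} + 5u u_{xxx} + (25/2)u_x u_{xx} + 5u² u_x, and for all (x,t): g_{xx} = 3g_x²/(4g) − ug + δ and g_t = ((1/2)u_{xx} + u²)g_x − (u_{xxx} + 4u u_x)g. Then h := g_x satisfies the linearized Kaup–Kupershmidt equation: h_t = h_{xxxxx} + 5u h_{xxx} + 5u_{xxx} h + (25/2)(u_x h_{xx} + u_{xx} h_x) + 5u² h_x + 10u u_x h. -/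

import Mathlib

/-!
By symmetry of second derivatives `∂ₜ g_x = ∂ₓ g_t`, and `g_t` is given explicitly, so both sides of
the claim involve only `x`-derivatives of `u` and `g` at a fixed time. Differentiating the polynomial
form `4 g g_xx = 3 g_x² - 4 u g² + 4 δ g` of the constraint four times (`constraint_jets`) expresses
`δ` and `g_xxx, …, g_xxxxxx` rationally in `g, g_x, g_xx` and the jets of `u`; after this substitution the claim
is an identity of rational functions with only powers of `g` in the denominator
(`linearized_identity`).
-/

noncomputable section

/-- Partial derivative in the first variable (x). -/
def pdx (f : ℝ → ℝ → ℝ) : ℝ → ℝ → ℝ := fun x t => deriv (fun x' => f x' t) x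

/-- Partial derivative in the second variable (t). -/
def pdt (f : ℝ → ℝ → ℝ) : ℝ → ℝ → ℝ := fun x t => deriv (fun t' => f x t') t

lemma hasDerivAt_fst {f : ℝ → ℝ → ℝ} (hf : ContDiff ℝ (⊤ : ℕ∞) (Function.uncurry f)) (x t : ℝ) :
    HasDerivAt (fun x' => f x' t) (fderiv ℝ (Function.uncurry f) (x, t) (1, 0)) x := by
  have h1 : HasFDerivAt (Function.uncurry f) (fderiv ℝ (Function.uncurry f) (x, t)) (x, t) :=
    (hf.differentiable (by simp) (x, t)).hasFDerivAt
  exact h1.comp_hasDerivAt x ((hasDerivAt_id x).prodMk (hasDerivAt_const x t))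

lemma hasDerivAt_snd {f : ℝ → ℝ → ℝ} (hf : ContDiff ℝ (⊤ : ℕ∞) (Function.uncurry f)) (x t : ℝ) :
    HasDerivAt (fun t' => f x t') (fderiv ℝ (Function.uncurry f) (x, t) (0, 1)) t := by
  have h1 : HasFDerivAt (Function.uncurry f) (fderiv ℝ (Function.uncurry f) (x, t)) (x, t) :=
    (hf.differentiable (by simp) (x, t)).hasFDerivAt
  exact h1.comp_hasDerivAt t ((hasDerivAt_const t x).prodMk (hasDerivAt_id t))

lemma contDiff_fderiv_apply {f : ℝ → ℝ → ℝ} (hf : ContDiff ℝ (⊤ : ℕ∞) (Function.uncurry f))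
    (v : ℝ × ℝ) : ContDiff ℝ (⊤ : ℕ∞) (fun p => fderiv ℝ (Function.uncurry f) p v) :=
  (hf.fderiv_right (m := (⊤ : ℕ∞)) (by simp)).clm_apply contDiff_const

lemma uncurry_pdx {f : ℝ → ℝ → ℝ} (hf : ContDiff ℝ (⊤ : ℕ∞) (Function.uncurry f)) :
    Function.uncurry (pdx f) = fun p => fderiv ℝ (Function.uncurry f) p (1, 0) := by
  funext ⟨x, t⟩
  exact (hasDerivAt_fst hf x t).deriv

lemma uncurry_pdt {f : ℝ → ℝ → ℝ} (hf : ContDiff ℝ (⊤ : ℕ∞) (Function.uncurry f)) :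
    Function.uncurry (pdt f) = fun p => fderiv ℝ (Function.uncurry f) p (0, 1) := by
  funext ⟨x, t⟩
  exact (hasDerivAt_snd hf x t).deriv

lemma contDiff_pdx {f : ℝ → ℝ → ℝ} (hf : ContDiff ℝ (⊤ : ℕ∞) (Function.uncurry f)) :
    ContDiff ℝ (⊤ : ℕ∞) (Function.uncurry (pdx f)) := by
  rw [uncurry_pdx hf]
  exact contDiff_fderiv_apply hf _

lemma contDiff_pdt {f : ℝ → ℝ → ℝ} (hf : ContDiff ℝ (⊤ : ℕ∞) (Function.uncurry f)) :
    ContDiff ℝ (⊤ : ℕ∞) (Function.uncurry (pdt f)) := by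
  rw [uncurry_pdt hf]
  exact contDiff_fderiv_apply hf _

lemma contDiff_pdx_iterate {f : ℝ → ℝ → ℝ} (hf : ContDiff ℝ (⊤ : ℕ∞) (Function.uncurry f)) (n : ℕ) :
    ContDiff ℝ (⊤ : ℕ∞) (Function.uncurry (pdx^[n] f)) := by
  induction n with
  | zero => exact hf
  | succ n ih =>
    rw [Function.iterate_succ_apply']
    exact contDiff_pdx ih

lemma hasDerivAt_pdx_iterate {f : ℝ → ℝ → ℝ} (hf : ContDiff ℝ (⊤ : ℕ∞) (Function.uncurry f))
    (n : ℕ) (x t : ℝ) :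
    HasDerivAt (fun x' => pdx^[n] f x' t) (pdx^[n + 1] f x t) x := by
  rw [Function.iterate_succ_apply']
  exact (hasDerivAt_fst (contDiff_pdx_iterate hf n) x t).differentiableAt.hasDerivAt

/-- Mixed partial derivatives of a smooth function commute. -/
lemma pdt_pdx_comm {f : ℝ → ℝ → ℝ} (hf : ContDiff ℝ (⊤ : ℕ∞) (Function.uncurry f)) (x t : ℝ) :
    pdt (pdx f) x t = pdx (pdt f) x t := by
  have h1 : pdt (pdx f) x t = _ := (hasDerivAt_snd (contDiff_pdx hf) x t).deriv
  have h2 : pdx (pdt f) x t = _ := (hasDerivAt_fst (contDiff_pdt hf) x t).deriv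
  have hd : DifferentiableAt ℝ (fderiv ℝ (Function.uncurry f)) (x, t) :=
    (hf.fderiv_right (m := (⊤ : ℕ∞)) (by simp)).differentiable (by simp) _
  have key : ∀ v w : ℝ × ℝ, fderiv ℝ (fun p => fderiv ℝ (Function.uncurry f) p v) (x, t) w
      = fderiv ℝ (fderiv ℝ (Function.uncurry f)) (x, t) w v := by
    intro v w
    have h := hd.hasFDerivAt.clm_apply (hasFDerivAt_const v (x, t))
    rw [h.fderiv]
    simp
  have hs : IsSymmSndFDerivAt ℝ (Function.uncurry f) (x, t) :=
    hf.contDiffAt.isSymmSndFDerivAt (by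
      simp only [minSmoothness_of_isRCLikeNormedField]
      exact WithTop.coe_le_coe.2 le_top)
  rw [h1, h2, uncurry_pdx hf, uncurry_pdt hf, key, key]
  exact hs _ _

lemma deriv_eq_of_eq {A B : ℝ → ℝ} {a b x : ℝ} (h : ∀ y, A y = B y)
    (hA : HasDerivAt A a x) (hB : HasDerivAt B b x) : a = b := by
  obtain rfl : A = B := funext h
  exact hA.unique hB

/-- The constraint and its first four derivatives, for jets `G k` of `g` and `U k` of `u` in one
variable; the relation of order `k` is solved for `4 g g⁽ᵏ⁺²⁾`. -/
lemma constraint_jets (δ : ℝ) (U G : ℕ → ℝ → ℝ)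
    (dU : ∀ n x, HasDerivAt (U n) (U (n + 1) x) x)
    (dG : ∀ n x, HasDerivAt (G n) (G (n + 1) x) x)
    (e0 : ∀ x, 4 * G 0 x * G 2 x = 3 * G 1 x ^ 2 - 4 * U 0 x * G 0 x ^ 2 + 4 * δ * G 0 x) (x : ℝ) :
    (4 * G 0 x * G 3 x = 2 * G 1 x * G 2 x - 4 * U 1 x * G 0 x ^ 2 - 8 * U 0 x * G 0 x * G 1 x
      + 4 * δ * G 1 x) ∧
    (4 * G 0 x * G 4 x = 2 * G 2 x ^ 2 - 2 * G 1 x * G 3 x - 4 * U 2 x * G 0 x ^ 2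
      - 16 * U 1 x * G 0 x * G 1 x - 8 * U 0 x * G 1 x ^ 2 - 8 * U 0 x * G 0 x * G 2 x
      + 4 * δ * G 2 x) ∧
    (4 * G 0 x * G 5 x = 2 * G 2 x * G 3 x - 6 * G 1 x * G 4 x - 4 * U 3 x * G 0 x ^ 2
      - 24 * U 2 x * G 0 x * G 1 x - 24 * U 1 x * G 1 x ^ 2 - 24 * U 1 x * G 0 x * G 2 x
      - 24 * U 0 x * G 1 x * G 2 x - 8 * U 0 x * G 0 x * G 3 x + 4 * δ * G 3 x) ∧
    (4 * G 0 x * G 6 x = 2 * G 3 x ^ 2 - 4 * G 2 x * G 4 x - 10 * G 1 x * G 5 x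
      - 4 * U 4 x * G 0 x ^ 2 - 32 * U 3 x * G 0 x * G 1 x - 48 * U 2 x * G 1 x ^ 2
      - 48 * U 2 x * G 0 x * G 2 x - 96 * U 1 x * G 1 x * G 2 x - 32 * U 1 x * G 0 x * G 3 x
      - 24 * U 0 x * G 2 x ^ 2 - 32 * U 0 x * G 1 x * G 3 x - 8 * U 0 x * G 0 x * G 4 x
      + 4 * δ * G 4 x) := by
  have e1 : ∀ x, 4 * G 0 x * G 3 x = 2 * G 1 x * G 2 x - 4 * U 1 x * G 0 x ^ 2
      - 8 * U 0 x * G 0 x * G 1 x + 4 * δ * G 1 x := by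
    intro x
    have h := deriv_eq_of_eq e0 (((dG 0 x).const_mul 4).fun_mul (dG 2 x))
      ((((dG 1 x).fun_pow 2).const_mul 3).fun_sub
        (((dU 0 x).const_mul 4).fun_mul ((dG 0 x).fun_pow 2))
        |>.fun_add ((dG 0 x).const_mul (4 * δ)))
    norm_num at h
    linear_combination h
  have e2 : ∀ x, 4 * G 0 x * G 4 x = 2 * G 2 x ^ 2 - 2 * G 1 x * G 3 x - 4 * U 2 x * G 0 x ^ 2
      - 16 * U 1 x * G 0 x * G 1 x - 8 * U 0 x * G 1 x ^ 2 - 8 * U 0 x * G 0 x * G 2 x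
      + 4 * δ * G 2 x := by
    intro x
    have h := deriv_eq_of_eq e1 (((dG 0 x).const_mul 4).fun_mul (dG 3 x))
      (((((dG 1 x).const_mul 2).fun_mul (dG 2 x)).fun_sub
        (((dU 1 x).const_mul 4).fun_mul ((dG 0 x).fun_pow 2))
        |>.fun_sub ((((dU 0 x).const_mul 8).fun_mul (dG 0 x)).fun_mul (dG 1 x)))
        |>.fun_add ((dG 1 x).const_mul (4 * δ)))
    norm_num at h
    linear_combination h
  have e3 : ∀ x, 4 * G 0 x * G 5 x = 2 * G 2 x * G 3 x - 6 * G 1 x * G 4 x - 4 * U 3 x * G 0 x ^ 2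
      - 24 * U 2 x * G 0 x * G 1 x - 24 * U 1 x * G 1 x ^ 2 - 24 * U 1 x * G 0 x * G 2 x
      - 24 * U 0 x * G 1 x * G 2 x - 8 * U 0 x * G 0 x * G 3 x + 4 * δ * G 3 x := by
    intro x
    have h := deriv_eq_of_eq e2 (((dG 0 x).const_mul 4).fun_mul (dG 4 x))
      ((((dG 2 x).fun_pow 2).const_mul 2).fun_sub (((dG 1 x).const_mul 2).fun_mul (dG 3 x))
        |>.fun_sub (((dU 2 x).const_mul 4).fun_mul ((dG 0 x).fun_pow 2))
        |>.fun_sub ((((dU 1 x).const_mul 16).fun_mul (dG 0 x)).fun_mul (dG 1 x))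
        |>.fun_sub (((dU 0 x).const_mul 8).fun_mul ((dG 1 x).fun_pow 2))
        |>.fun_sub ((((dU 0 x).const_mul 8).fun_mul (dG 0 x)).fun_mul (dG 2 x))
        |>.fun_add ((dG 2 x).const_mul (4 * δ)))
    norm_num at h
    linear_combination h
  refine ⟨e1 x, e2 x, e3 x, ?_⟩
  have h := deriv_eq_of_eq e3 (((dG 0 x).const_mul 4).fun_mul (dG 5 x))
    ((((dG 2 x).const_mul 2).fun_mul (dG 3 x)).fun_sub (((dG 1 x).const_mul 6).fun_mul (dG 4 x))
      |>.fun_sub (((dU 3 x).const_mul 4).fun_mul ((dG 0 x).fun_pow 2))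
      |>.fun_sub ((((dU 2 x).const_mul 24).fun_mul (dG 0 x)).fun_mul (dG 1 x))
      |>.fun_sub (((dU 1 x).const_mul 24).fun_mul ((dG 1 x).fun_pow 2))
      |>.fun_sub ((((dU 1 x).const_mul 24).fun_mul (dG 0 x)).fun_mul (dG 2 x))
      |>.fun_sub ((((dU 0 x).const_mul 24).fun_mul (dG 1 x)).fun_mul (dG 2 x))
      |>.fun_sub ((((dU 0 x).const_mul 8).fun_mul (dG 0 x)).fun_mul (dG 3 x))
      |>.fun_add ((dG 3 x).const_mul (4 * δ)))
  norm_num at h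
  linear_combination h

/-- The algebraic core: modulo the differentiated constraints, `∂ₓ` of the prescribed `g_t` equals
the linearized Kaup–Kupershmidt operator applied to `g_x`. -/
lemma linearized_identity (δ u u1 u2 u3 u4 g g1 g2 g3 g4 g5 g6 : ℝ) (hg : g ≠ 0)
    (e0 : 4 * g * g2 = 3 * g1 ^ 2 - 4 * u * g ^ 2 + 4 * δ * g)
    (e1 : 4 * g * g3 = 2 * g1 * g2 - 4 * u1 * g ^ 2 - 8 * u * g * g1 + 4 * δ * g1)
    (e2 : 4 * g * g4 = 2 * g2 ^ 2 - 2 * g1 * g3 - 4 * u2 * g ^ 2 - 16 * u1 * g * g1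
      - 8 * u * g1 ^ 2 - 8 * u * g * g2 + 4 * δ * g2)
    (e3 : 4 * g * g5 = 2 * g2 * g3 - 6 * g1 * g4 - 4 * u3 * g ^ 2 - 24 * u2 * g * g1
      - 24 * u1 * g1 ^ 2 - 24 * u1 * g * g2 - 24 * u * g1 * g2 - 8 * u * g * g3 + 4 * δ * g3)
    (e4 : 4 * g * g6 = 2 * g3 ^ 2 - 4 * g2 * g4 - 10 * g1 * g5 - 4 * u4 * g ^ 2
      - 32 * u3 * g * g1 - 48 * u2 * g1 ^ 2 - 48 * u2 * g * g2 - 96 * u1 * g1 * g2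
      - 32 * u1 * g * g3 - 24 * u * g2 ^ 2 - 32 * u * g1 * g3 - 8 * u * g * g4 + 4 * δ * g4) :
    (1 / 2 * u3 + 2 * u * u1) * g1 + (1 / 2 * u2 + u ^ 2) * g2
      - ((u4 + 4 * (u1 * u1 + u * u2)) * g + (u3 + 4 * u * u1) * g1)
      = g6 + 5 * u * g4 + 5 * u3 * g1 + 25 / 2 * (u1 * g3 + u2 * g2) + 5 * u ^ 2 * g2
        + 10 * u * u1 * g1 := by
  have h4 : (4 * g) ≠ 0 := mul_ne_zero four_ne_zero hg
  -- Eliminating `δ` through `e0` (rather than `g2`) keeps the denominators small.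
  have d0 : δ = g2 - 3 * g1 ^ 2 / (4 * g) + u * g := by
    field_simp; linear_combination -e0
  subst d0
  have s3 : g3 = 3 * g1 * g2 / (2 * g) - 3 * g1 ^ 3 / (4 * g ^ 2) - u1 * g - u * g1 := by
    rw [← mul_right_inj' h4, e1]; field_simp; ring
  subst s3
  have s4 := (eq_div_iff h4).2 ((mul_comm _ _).trans e2)
  subst s4
  have s5 := (eq_div_iff h4).2 ((mul_comm _ _).trans e3)
  subst s5
  have s6 := (eq_div_iff h4).2 ((mul_comm _ _).trans e4)
  subst s6
  field_simp
  ring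

theorem stmt8 (δ : ℝ) (u g : ℝ → ℝ → ℝ)
    (hu : ContDiff ℝ (⊤ : ℕ∞) (Function.uncurry u))
    (hg : ContDiff ℝ (⊤ : ℕ∞) (Function.uncurry g))
    (hg0 : ∀ x t, g x t ≠ 0)
    (hKK : ∀ x t, pdt u x t = pdx^[5] u x t + 5 * u x t * pdx^[3] u x t
      + (25 / 2) * pdx u x t * pdx^[2] u x t + 5 * u x t ^ 2 * pdx u x t)
    (hgxx : ∀ x t, pdx^[2] g x t = 3 * (pdx g x t) ^ 2 / (4 * g x t)
      - u x t * g x t + δ)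
    (hgt : ∀ x t, pdt g x t = ((1 / 2) * pdx^[2] u x t + u x t ^ 2) * pdx g x t
      - (pdx^[3] u x t + 4 * u x t * pdx u x t) * g x t) :
    ∀ x t, pdt (pdx g) x t =
      pdx^[5] (pdx g) x t + 5 * u x t * pdx^[3] (pdx g) x t
        + 5 * pdx^[3] u x t * pdx g x t
        + (25 / 2) * (pdx u x t * pdx^[2] (pdx g) x t
            + pdx^[2] u x t * pdx (pdx g) x t)
        + 5 * u x t ^ 2 * pdx (pdx g) x t
        + 10 * u x t * pdx u x t * pdx g x t := by
  intro x t
  have dU := fun n (x : ℝ) => hasDerivAt_pdx_iterate hu n x t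
  have dG := fun n (x : ℝ) => hasDerivAt_pdx_iterate hg n x t
  have e0 : ∀ x, 4 * g x t * pdx^[2] g x t
      = 3 * pdx g x t ^ 2 - 4 * u x t * g x t ^ 2 + 4 * δ * g x t := by
    intro x
    have := hg0 x t
    rw [hgxx]
    field_simp
  obtain ⟨e1, e2, e3, e4⟩ := constraint_jets δ (fun n x => pdx^[n] u x t)
    (fun n x => pdx^[n] g x t) dU dG e0 x
  have key := linearized_identity δ (u x t) (pdx u x t) (pdx^[2] u x t) (pdx^[3] u x t)
    (pdx^[4] u x t) (g x t) (pdx g x t) (pdx^[2] g x t) (pdx^[3] g x t) (pdx^[4] g x t)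
    (pdx^[5] g x t) (pdx^[6] g x t) (hg0 x t) (e0 x) e1 e2 e3 e4
  rw [pdt_pdx_comm hg]
  have hx : pdx (pdt g) x t = _ := deriv_eq_of_eq (fun y => hgt y t)
    (hasDerivAt_fst (contDiff_pdt hg) x t).differentiableAt.hasDerivAt
    (((((dU 2 x).const_mul (1 / 2)).fun_add ((dU 0 x).fun_pow 2)).fun_mul (dG 1 x)).fun_sub
      (((dU 3 x).fun_add (((dU 0 x).const_mul 4).fun_mul (dU 1 x))).fun_mul (dG 0 x)))
  refine Eq.trans ?_ key
  rw [hx]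
  simp only [Function.iterate_zero, id_eq, Function.iterate_one, Nat.reduceAdd, Nat.cast_ofNat,
    Nat.add_one_sub_one, pow_one]
  ring
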